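/- (Acyclic normalisation) Every acyclic diagram d : ▶^m → ▶^n in Syn_M is PGA-equal to an acyclic diagram in normal form. -/

import Mathlib

set_option autoImplicit true
set_option linter.unusedVariables false

namespace PaperPG

/-! ## The diagrammatic syntax `Syn_M` and the equational theory PGA -/

/-- The two generating objects (wire colours): `r` = ▶ and `l` = ◀. -/
inductive Obj : Type
  | r : Obj
  | l : Obj
  deriving DecidableEq

/-- Objects of the free prop: words over `{▶, ◀}`. -/
abbrev Word := List Obj

/-- The word `▶^m`. -/
def rword (m : ℕ) : Word := List.replicate m Obj.r

/-- Morphisms of the free two-coloured prop `Syn_M`: formal (sequential and parallel)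
composites of identities, symmetries and the generators of the calculus of parity
games, with priorities bounded by `M`. -/
inductive Syn (M : ℕ) : Word → Word → Type where
  | id : (v : Word) → Syn M v v
  | comp : {u v w : Word} → Syn M u v → Syn M v w → Syn M u w
  | tensor : {u1 w1 u2 w2 : Word} → Syn M u1 w1 → Syn M u2 w2 → Syn M (u1 ++ u2) (w1 ++ w2)
  | symm : (v w : Word) → Syn M (v ++ w) (w ++ v)
  | player0 : Syn M [Obj.r] [Obj.r, Obj.r]
  | lose0 : Syn M [Obj.r] []
  | player1 : Syn M [Obj.r] [Obj.r, Obj.r]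
  | lose1 : Syn M [Obj.r] []
  | merge : Syn M [Obj.r, Obj.r] [Obj.r]
  | start : Syn M [] [Obj.r]
  | priority : Fin (M + 1) → Syn M [Obj.r] [Obj.r]
  | cup : Syn M [] [Obj.r, Obj.l]
  | cap : Syn M [Obj.l, Obj.r] []

infixl:60 " ⨟ " => Syn.comp
infixl:65 " ⊠ " => Syn.tensor

/-- Transport a diagram along equalities of words. -/
def Syn.castHom {M : ℕ} {u u' w w' : Word} (hu : u = u') (hw : w = w')
    (f : Syn M u w) : Syn M u' w' := by
  subst hu; subst hw; exact f

/-- The inner body of the parity axiom: `merge ⨟ player0` followed by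
`(player1 ⨟ (id ⊠ priority p)) ⊠ id`. -/
def parityBody (M : ℕ) (p : Fin (M + 1)) : Syn M [Obj.r, Obj.r] [Obj.r, Obj.r, Obj.r] :=
  Syn.merge ⨟ Syn.player0
    ⨟ ((Syn.player1 ⨟ (Syn.id [Obj.r] ⊠ Syn.priority p) : Syn M [Obj.r] [Obj.r, Obj.r])
        ⊠ Syn.id [Obj.r])

/-- The left-hand side of the parity axiom (E): the feedback loop formed, via `cup`
and `cap`, by feeding the `priority p` output of `parityBody` back to its second
input. -/
def parityLHS (M : ℕ) (p : Fin (M + 1)) : Syn M [Obj.r] [Obj.r, Obj.r] :=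
  (Syn.id [Obj.r] ⊠ Syn.cup : Syn M [Obj.r] [Obj.r, Obj.r, Obj.l])
  ⨟ (parityBody M p ⊠ Syn.id [Obj.l] : Syn M [Obj.r, Obj.r, Obj.l] [Obj.r, Obj.r, Obj.r, Obj.l])
  ⨟ ((Syn.id [Obj.r] ⊠ Syn.id [Obj.r]) ⊠ Syn.symm [Obj.r] [Obj.l] :
      Syn M [Obj.r, Obj.r, Obj.r, Obj.l] [Obj.r, Obj.r, Obj.l, Obj.r])
  ⨟ ((Syn.id [Obj.r] ⊠ Syn.symm [Obj.r] [Obj.l]) ⊠ Syn.id [Obj.r] :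
      Syn M [Obj.r, Obj.r, Obj.l, Obj.r] [Obj.r, Obj.l, Obj.r, Obj.r])
  ⨟ ((Syn.id [Obj.r] ⊠ Syn.cap) ⊠ Syn.id [Obj.r] :
      Syn M [Obj.r, Obj.l, Obj.r, Obj.r] [Obj.r, Obj.r])

/-- The smallest congruence (with respect to sequential and parallel composition) on
the morphisms of `Syn_M` containing the laws of symmetric monoidal categories and the
axioms of Parity Game Algebra (PGA): (A) compact closure and loop removal,
(B) the distributive lattice axioms, (C) the priority axioms, (D) the distributive
law of priorities over the lattice structure and (E) the parity axiom. -/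
inductive PGAeq {M : ℕ} : {v w : Word} → Syn M v w → Syn M v w → Prop where
  -- equivalence
  | refl (f : Syn M v w) : PGAeq f f
  | symm_rel {f g : Syn M v w} : PGAeq f g → PGAeq g f
  | trans {f g h : Syn M v w} : PGAeq f g → PGAeq g h → PGAeq f h
  -- congruence with respect to the two compositions
  | comp_congr {f f' : Syn M u v} {g g' : Syn M v w} :
      PGAeq f f' → PGAeq g g' → PGAeq (f ⨟ g) (f' ⨟ g')
  | tensor_congr {f f' : Syn M u1 w1} {g g' : Syn M u2 w2} :
      PGAeq f f' → PGAeq g g' → PGAeq (f ⊠ g) (f' ⊠ g')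
  -- laws of (strict) symmetric monoidal categories
  | comp_assoc (f : Syn M u v) (g : Syn M v w) (h : Syn M w x) :
      PGAeq ((f ⨟ g) ⨟ h) (f ⨟ (g ⨟ h))
  | id_comp (f : Syn M v w) : PGAeq (Syn.id v ⨟ f) f
  | comp_id (f : Syn M v w) : PGAeq (f ⨟ Syn.id w) f
  | tensor_id (v w : Word) : PGAeq (Syn.id v ⊠ Syn.id w) (Syn.id (v ++ w))
  | interchange (f1 : Syn M u1 v1) (g1 : Syn M v1 w1) (f2 : Syn M u2 v2) (g2 : Syn M v2 w2) :
      PGAeq ((f1 ⨟ g1) ⊠ (f2 ⨟ g2)) ((f1 ⊠ f2) ⨟ (g1 ⊠ g2))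
  | tensor_assoc (f : Syn M u1 w1) (g : Syn M u2 w2) (h : Syn M u3 w3) :
      PGAeq (Syn.castHom (List.append_assoc u1 u2 u3) (List.append_assoc w1 w2 w3)
              ((f ⊠ g) ⊠ h))
            (f ⊠ (g ⊠ h))
  | tensor_nil (f : Syn M u w) :
      PGAeq (Syn.castHom (List.append_nil u) (List.append_nil w) (f ⊠ Syn.id [])) f
  | swap_nat (f : Syn M u1 w1) (g : Syn M u2 w2) :
      PGAeq ((f ⊠ g) ⨟ Syn.symm w1 w2) (Syn.symm u1 u2 ⨟ (g ⊠ f))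
  | swap_inv (v w : Word) : PGAeq (Syn.symm v w ⨟ Syn.symm w v) (Syn.id (v ++ w))
  | hexagon (u v w : Word) :
      PGAeq (Syn.symm u (v ++ w))
        (Syn.castHom (List.append_assoc u v w) (List.append_assoc v w u).symm
          ((Syn.symm u v ⊠ Syn.id w)
            ⨟ Syn.castHom (List.append_assoc v u w).symm rfl (Syn.id v ⊠ Syn.symm u w)))
  -- (A) compact closure: yanking, and removal of a closed loop
  | yank_r : PGAeq (v := [Obj.r]) (w := [Obj.r]) ((Syn.cup ⊠ Syn.id [Obj.r]) ⨟ (Syn.id [Obj.r] ⊠ Syn.cap))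
      (Syn.id [Obj.r])
  | yank_l : PGAeq (v := [Obj.l]) (w := [Obj.l]) ((Syn.id [Obj.l] ⊠ Syn.cup) ⨟ (Syn.cap ⊠ Syn.id [Obj.l]))
      (Syn.id [Obj.l])
  | loop : PGAeq (v := ([] : Word)) (w := ([] : Word)) (Syn.cup ⨟ Syn.symm [Obj.r] [Obj.l] ⨟ Syn.cap) (Syn.id [])
  -- (B) distributive lattice axioms
  | B1 : PGAeq (v := [Obj.r, Obj.r, Obj.r]) (w := [Obj.r]) ((Syn.merge ⊠ Syn.id [Obj.r]) ⨟ Syn.merge)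
      ((Syn.id [Obj.r] ⊠ Syn.merge) ⨟ Syn.merge)
  | B2 : PGAeq (v := [Obj.r, Obj.r]) (w := [Obj.r]) (Syn.symm [Obj.r] [Obj.r] ⨟ Syn.merge) Syn.merge
  | B3r : PGAeq (v := [Obj.r]) (w := [Obj.r]) ((Syn.id [Obj.r] ⊠ Syn.start) ⨟ Syn.merge) (Syn.id [Obj.r])
  | B3l : PGAeq (v := [Obj.r]) (w := [Obj.r]) ((Syn.start ⊠ Syn.id [Obj.r]) ⨟ Syn.merge) (Syn.id [Obj.r])
  | B4 : PGAeq (v := [Obj.r]) (w := [Obj.r, Obj.r, Obj.r]) (Syn.player0 ⨟ (Syn.player0 ⊠ Syn.id [Obj.r]))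
      (Syn.player0 ⨟ (Syn.id [Obj.r] ⊠ Syn.player0))
  | B5 : PGAeq (v := [Obj.r]) (w := [Obj.r, Obj.r]) (Syn.player0 ⨟ Syn.symm [Obj.r] [Obj.r]) Syn.player0
  | B6r : PGAeq (v := [Obj.r]) (w := [Obj.r]) (Syn.player0 ⨟ (Syn.lose0 ⊠ Syn.id [Obj.r])) (Syn.id [Obj.r])
  | B6l : PGAeq (v := [Obj.r]) (w := [Obj.r]) (Syn.player0 ⨟ (Syn.id [Obj.r] ⊠ Syn.lose0)) (Syn.id [Obj.r])
  | B7 : PGAeq (v := [Obj.r]) (w := [Obj.r, Obj.r, Obj.r]) (Syn.player1 ⨟ (Syn.player1 ⊠ Syn.id [Obj.r]))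
      (Syn.player1 ⨟ (Syn.id [Obj.r] ⊠ Syn.player1))
  | B8 : PGAeq (v := [Obj.r]) (w := [Obj.r, Obj.r]) (Syn.player1 ⨟ Syn.symm [Obj.r] [Obj.r]) Syn.player1
  | B9r : PGAeq (v := [Obj.r]) (w := [Obj.r]) (Syn.player1 ⨟ (Syn.lose1 ⊠ Syn.id [Obj.r])) (Syn.id [Obj.r])
  | B9l : PGAeq (v := [Obj.r]) (w := [Obj.r]) (Syn.player1 ⨟ (Syn.id [Obj.r] ⊠ Syn.lose1)) (Syn.id [Obj.r])
  | B10 : PGAeq (v := [Obj.r, Obj.r]) (w := [Obj.r, Obj.r]) (Syn.merge ⨟ Syn.player0)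
      ((Syn.player0 ⊠ Syn.player0)
        ⨟ ((Syn.id [Obj.r] ⊠ Syn.symm [Obj.r] [Obj.r]) ⊠ Syn.id [Obj.r] :
          Syn M [Obj.r, Obj.r, Obj.r, Obj.r] [Obj.r, Obj.r, Obj.r, Obj.r])
        ⨟ (Syn.merge ⊠ Syn.merge))
  | B11 : PGAeq (v := [Obj.r, Obj.r]) (w := ([] : Word)) (Syn.merge ⨟ Syn.lose0) (Syn.lose0 ⊠ Syn.lose0)
  | B12 : PGAeq (v := ([] : Word)) (w := [Obj.r, Obj.r]) (Syn.start ⨟ Syn.player0) (Syn.start ⊠ Syn.start)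
  | B13 : PGAeq (v := ([] : Word)) (w := [Obj.r, Obj.r]) (Syn.start ⨟ Syn.player1) (Syn.start ⊠ Syn.start)
  | B14 : PGAeq (v := ([] : Word)) (w := ([] : Word)) (Syn.start ⨟ Syn.lose0) (Syn.id [])
  | B15 : PGAeq (v := ([] : Word)) (w := ([] : Word)) (Syn.start ⨟ Syn.lose1) (Syn.id [])
  | B16 : PGAeq (v := [Obj.r]) (w := [Obj.r]) (Syn.player0 ⨟ Syn.merge) (Syn.id [Obj.r])
  | B17 : PGAeq (v := [Obj.r]) (w := [Obj.r]) (Syn.player1 ⨟ Syn.merge) (Syn.id [Obj.r])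
  | B18 : PGAeq (v := [Obj.r, Obj.r]) (w := [Obj.r, Obj.r]) (Syn.merge ⨟ Syn.player1)
      ((Syn.player1 ⊠ Syn.player1)
        ⨟ ((Syn.id [Obj.r] ⊠ Syn.symm [Obj.r] [Obj.r]) ⊠ Syn.id [Obj.r] :
          Syn M [Obj.r, Obj.r, Obj.r, Obj.r] [Obj.r, Obj.r, Obj.r, Obj.r])
        ⨟ (Syn.merge ⊠ Syn.merge))
  | B19 : PGAeq (v := [Obj.r, Obj.r]) (w := ([] : Word)) (Syn.merge ⨟ Syn.lose1) (Syn.lose1 ⊠ Syn.lose1)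
  | B20 : PGAeq (v := [Obj.r]) (w := [Obj.r, Obj.r, Obj.r]) (Syn.player0 ⨟ (Syn.player1 ⊠ Syn.id [Obj.r]))
      (Syn.player1 ⨟ (Syn.player0 ⊠ Syn.player0)
        ⨟ ((Syn.id [Obj.r] ⊠ Syn.symm [Obj.r] [Obj.r]) ⊠ Syn.id [Obj.r] :
          Syn M [Obj.r, Obj.r, Obj.r, Obj.r] [Obj.r, Obj.r, Obj.r, Obj.r])
        ⨟ ((Syn.id [Obj.r] ⊠ Syn.id [Obj.r]) ⊠ Syn.merge :
          Syn M [Obj.r, Obj.r, Obj.r, Obj.r] [Obj.r, Obj.r, Obj.r]))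
  | B21 : PGAeq (v := [Obj.r]) (w := [Obj.r]) (Syn.player0 ⨟ (Syn.lose1 ⊠ Syn.id [Obj.r])) (Syn.lose1 ⨟ Syn.start)
  | B22 : PGAeq (v := [Obj.r]) (w := [Obj.r, Obj.r, Obj.r]) (Syn.player1 ⨟ (Syn.player0 ⊠ Syn.id [Obj.r]))
      (Syn.player0 ⨟ (Syn.player1 ⊠ Syn.player1)
        ⨟ ((Syn.id [Obj.r] ⊠ Syn.symm [Obj.r] [Obj.r]) ⊠ Syn.id [Obj.r] :
          Syn M [Obj.r, Obj.r, Obj.r, Obj.r] [Obj.r, Obj.r, Obj.r, Obj.r])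
        ⨟ ((Syn.id [Obj.r] ⊠ Syn.id [Obj.r]) ⊠ Syn.merge :
          Syn M [Obj.r, Obj.r, Obj.r, Obj.r] [Obj.r, Obj.r, Obj.r]))
  | B23 : PGAeq (v := [Obj.r]) (w := [Obj.r]) (Syn.player1 ⨟ (Syn.lose0 ⊠ Syn.id [Obj.r])) (Syn.lose0 ⨟ Syn.start)
  -- (C) priority axioms
  | C1 (p : Fin (M + 1)) : PGAeq (v := [Obj.r, Obj.r]) (w := [Obj.r]) ((Syn.priority p ⊠ Syn.priority p) ⨟ Syn.merge)
      (Syn.merge ⨟ Syn.priority p)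
  | C2 (p : Fin (M + 1)) : PGAeq (v := ([] : Word)) (w := [Obj.r]) (Syn.start ⨟ Syn.priority p) Syn.start
  | C3 (p q : Fin (M + 1)) : PGAeq (v := [Obj.r]) (w := [Obj.r]) (Syn.priority p ⨟ Syn.priority q)
      (Syn.priority (max p q))
  | C4 : PGAeq (Syn.priority 0) (Syn.id [Obj.r])
  -- (D) distributive law of priorities over the lattice structure
  | D1 (p : Fin (M + 1)) : PGAeq (v := [Obj.r]) (w := [Obj.r, Obj.r]) (Syn.priority p ⨟ Syn.player0)
      (Syn.player0 ⨟ (Syn.priority p ⊠ Syn.priority p))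
  | D2 (p : Fin (M + 1)) : PGAeq (v := [Obj.r]) (w := ([] : Word)) (Syn.priority p ⨟ Syn.lose0) Syn.lose0
  | D3 (p : Fin (M + 1)) : PGAeq (v := [Obj.r]) (w := [Obj.r, Obj.r]) (Syn.priority p ⨟ Syn.player1)
      (Syn.player1 ⨟ (Syn.priority p ⊠ Syn.priority p))
  | D4 (p : Fin (M + 1)) : PGAeq (v := [Obj.r]) (w := ([] : Word)) (Syn.priority p ⨟ Syn.lose1) Syn.lose1
  -- (E) the parity axiom
  | parity_even (p : Fin (M + 1)) (h : Even p.val) :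
      PGAeq (parityLHS M p) Syn.player0
  | parity_odd (p : Fin (M + 1)) (h : Odd p.val) :
      PGAeq (v := [Obj.r]) (w := [Obj.r, Obj.r]) (parityLHS M p) (Syn.start ⊠ Syn.id [Obj.r])
/-! ## Acyclic diagrams, layers and normal forms -/

/-- A diagram is *acyclic* if it is composed only of the generators
`player0, lose0, player1, lose1, merge, start, priority p` (together with
identities and wire crossings on `▶`-wires), i.e. it contains no `cup` or `cap`. -/
inductive Acyclic {M : ℕ} : {v w : Word} → Syn M v w → Prop where
  | id (k : ℕ) : Acyclic (Syn.id (rword k))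
  | symm (k j : ℕ) : Acyclic (Syn.symm (rword k) (rword j))
  | player0 : Acyclic Syn.player0
  | lose0 : Acyclic Syn.lose0
  | player1 : Acyclic Syn.player1
  | lose1 : Acyclic Syn.lose1
  | merge : Acyclic Syn.merge
  | start : Acyclic Syn.start
  | priority (p : Fin (M + 1)) : Acyclic (Syn.priority p)
  | comp {u v w : Word} {f : Syn M u v} {g : Syn M v w} :
      Acyclic f → Acyclic g → Acyclic (f ⨟ g)
  | tensor {u1 w1 u2 w2 : Word} {f : Syn M u1 w1} {g : Syn M u2 w2} :
      Acyclic f → Acyclic g → Acyclic (f ⊠ g)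

/-- A *layer* of generators from `S`: a diagram built only from generators in `S`
together with identities and wire crossings. -/
inductive Layer {M : ℕ} (S : {v w : Word} → Syn M v w → Prop) :
    {v w : Word} → Syn M v w → Prop where
  | base {v w : Word} {f : Syn M v w} : S f → Layer S f
  | id (k : ℕ) : Layer S (Syn.id (rword k))
  | symm (k j : ℕ) : Layer S (Syn.symm (rword k) (rword j))
  | comp {u v w : Word} {f : Syn M u v} {g : Syn M v w} :
      Layer S f → Layer S g → Layer S (f ⨟ g)
  | tensor {u1 w1 u2 w2 : Word} {f : Syn M u1 w1} {g : Syn M u2 w2} :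
      Layer S f → Layer S g → Layer S (f ⊠ g)

/-- The generators `player0`, `lose0`. -/
inductive Gen0 {M : ℕ} : {v w : Word} → Syn M v w → Prop where
  | player0 : Gen0 Syn.player0
  | lose0 : Gen0 Syn.lose0

/-- The generators `player1`, `lose1`. -/
inductive Gen1 {M : ℕ} : {v w : Word} → Syn M v w → Prop where
  | player1 : Gen1 Syn.player1
  | lose1 : Gen1 Syn.lose1

/-- The generators `priority p`. -/
inductive GenP {M : ℕ} : {v w : Word} → Syn M v w → Prop where
  | priority (p : Fin (M + 1)) : GenP (Syn.priority p)

/-- The generators `merge`, `start`. -/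
inductive GenM {M : ℕ} : {v w : Word} → Syn M v w → Prop where
  | merge : GenM Syn.merge
  | start : GenM Syn.start

/-- A diagram is in *normal form* when it factors into a layer of `player0/lose0`,
followed by a layer of `player1/lose1`, followed by a layer of priorities, followed
by a layer of `merge/start`. -/
def InNormalForm {M : ℕ} {v w : Word} (d : Syn M v w) : Prop :=
  ∃ (a b c : Word) (f1 : Syn M v a) (f2 : Syn M a b) (f3 : Syn M b c) (f4 : Syn M c w),
    Layer Gen0 f1 ∧ Layer Gen1 f2 ∧ Layer GenP f3 ∧ Layer GenM f4 ∧
    d = f1 ⨟ (f2 ⨟ (f3 ⨟ f4))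

theorem rword_append (a b : ℕ) : rword a ++ rword b = rword (a + b) :=
  (List.replicate_add a b Obj.r).symm

theorem mergeN_dom (k : ℕ) :
    [Obj.r] ++ ((rword k ++ [Obj.r]) ++ rword k) = rword ((k + 1) + (k + 1)) := by
  show rword 1 ++ ((rword k ++ rword 1) ++ rword k) = rword ((k + 1) + (k + 1))
  simp only [rword_append]
  exact congrArg rword (by omega)

theorem mergeN_mid (k : ℕ) :
    [Obj.r, Obj.r] ++ rword (k + k) = [Obj.r] ++ (([Obj.r] ++ rword k) ++ rword k) := by
  show rword 2 ++ rword (k + k) = rword 1 ++ ((rword 1 ++ rword k) ++ rword k)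
  simp only [rword_append]
  exact congrArg rword (by omega)

/-- The `k`-wire generalisation `merge_k : ▶^{2k} → ▶^k` of `merge`, merging the
`i`-th wire of the first group with the `i`-th wire of the second group. -/
def mergeN (M : ℕ) : (k : ℕ) → Syn M (rword (k + k)) (rword k)
  | 0 => Syn.id []
  | k + 1 =>
      Syn.castHom (mergeN_dom k) rfl
        ((Syn.id [Obj.r] ⊠ (Syn.symm (rword k) [Obj.r] ⊠ Syn.id (rword k)))
          ⨟ Syn.castHom (mergeN_mid k) rfl (Syn.merge ⊠ mergeN M k))

/-- The `k`-wire generalisation `start_k : ε → ▶^k` of `start`. -/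
def startN (M : ℕ) : (k : ℕ) → Syn M [] (rword k)
  | 0 => Syn.id []
  | k + 1 => Syn.start ⊠ startN M k


section Helpers
open CategoryTheory MonoidalCategory MonObj

open CategoryTheory MonoidalCategory

/-! ## The quotient symmetric monoidal category -/

def AllR (w : Word) : Prop := ∀ x ∈ w, x = Obj.r

theorem AllR.append {u w : Word} (hu : AllR u) (hw : AllR w) : AllR (u ++ w) := by
  intro x hx
  rcases List.mem_append.1 hx with h | h
  · exact hu x h
  · exact hw x h

theorem AllR.eq {u : Word} (hu : AllR u) : u = rword u.length :=
  List.eq_replicate_iff.2 ⟨rfl, hu⟩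

theorem allR_rword (k : ℕ) : AllR (rword k) := fun x hx => List.eq_of_mem_replicate hx

structure Ob (M : ℕ) where
  w : Word
  h : AllR w

instance synSetoid (M : ℕ) (u w : Word) : Setoid (Syn M u w) where
  r := PGAeq
  iseqv := ⟨PGAeq.refl, PGAeq.symm_rel, PGAeq.trans⟩

def QHom (M : ℕ) (u w : Word) : Type := Quotient (synSetoid M u w)

def qm {M : ℕ} {u w : Word} (f : Syn M u w) : QHom M u w := Quotient.mk _ f

theorem qm_eq {M : ℕ} {u w : Word} {f g : Syn M u w} : qm f = qm g ↔ PGAeq f g :=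
  Quotient.eq (r := synSetoid M u w)

theorem qm_ind {M : ℕ} {u w : Word} {P : QHom M u w → Prop} (h : ∀ f, P (qm f)) (f) : P f :=
  Quotient.ind h f

def qcomp {M : ℕ} {u v w : Word} : QHom M u v → QHom M v w → QHom M u w :=
  Quotient.map₂ Syn.comp (fun _ _ h _ _ h' => PGAeq.comp_congr h h')

def qtensor {M : ℕ} {u v u' v' : Word} : QHom M u v → QHom M u' v' → QHom M (u ++ u') (v ++ v') :=
  Quotient.map₂ Syn.tensor (fun _ _ h _ _ h' => PGAeq.tensor_congr h h')

theorem qcomp_mk {M : ℕ} {u v w : Word} (f : Syn M u v) (g : Syn M v w) :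
    qcomp (qm f) (qm g) = qm (f ⨟ g) := rfl

theorem qtensor_mk {M : ℕ} {u v u' v' : Word} (f : Syn M u v) (g : Syn M u' v') :
    qtensor (qm f) (qm g) = qm (f ⊠ g) := rfl

theorem qassoc {M : ℕ} {u v w x : Word} (f : QHom M u v) (g : QHom M v w) (h : QHom M w x) :
    qcomp (qcomp f g) h = qcomp f (qcomp g h) := by
  induction f using qm_ind
  induction g using qm_ind
  induction h using qm_ind
  exact qm_eq.2 (PGAeq.comp_assoc _ _ _)

theorem qid_comp {M : ℕ} {u v : Word} (f : QHom M u v) : qcomp (qm (Syn.id u)) f = f := by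
  induction f using qm_ind
  exact qm_eq.2 (PGAeq.id_comp _)

theorem qcomp_id {M : ℕ} {u v : Word} (f : QHom M u v) : qcomp f (qm (Syn.id v)) = f := by
  induction f using qm_ind
  exact qm_eq.2 (PGAeq.comp_id _)

theorem qtid {M : ℕ} (u v : Word) :
    qtensor (qm (Syn.id (M := M) u)) (qm (Syn.id v)) = qm (Syn.id (u ++ v)) :=
  qm_eq.2 (PGAeq.tensor_id _ _)

theorem qinter {M : ℕ} {u v w u' v' w' : Word} (f : QHom M u v) (g : QHom M v w)
    (f' : QHom M u' v') (g' : QHom M v' w') :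
    qcomp (qtensor f f') (qtensor g g') = qtensor (qcomp f g) (qcomp f' g') := by
  induction f using qm_ind
  induction g using qm_ind
  induction f' using qm_ind
  induction g' using qm_ind
  exact (qm_eq.2 (PGAeq.interchange _ _ _ _)).symm

def eqh {M : ℕ} {u w : Word} (h : u = w) : Syn M u w := Syn.castHom rfl h (Syn.id u)

theorem qeqh_self {M : ℕ} {u : Word} (h : u = u) : qm (eqh (M := M) h) = qm (Syn.id u) := rfl

theorem qeqh_comp {M : ℕ} {u v w : Word} (h : u = v) (h' : v = w) :
    qcomp (qm (eqh (M := M) h)) (qm (eqh h')) = qm (eqh (h.trans h')) := by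
  subst h; subst h'; exact qid_comp _

theorem qeqh_tensor {M : ℕ} {u v u' v' : Word} (h : u = v) (h' : u' = v') :
    qtensor (qm (eqh (M := M) h)) (qm (eqh h')) = qm (eqh (by rw [h, h'])) := by
  subst h; subst h'; exact qtid _ _

theorem qcast {M : ℕ} {u v u' v' : Word} (h : u = u') (h' : v = v') (f : Syn M u v) :
    qm (Syn.castHom h h' f) = qcomp (qm (eqh h.symm)) (qcomp (qm f) (qm (eqh h'))) := by
  subst h; subst h'; rw [qeqh_self, qeqh_self, qcomp_id, qid_comp]; rfl

theorem qcast_comp {M : ℕ} {u v u' v' : Word} (h : u = u') (h' : v = v') (f : Syn M u v)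
    (g : Syn M u' v') (e : PGAeq (Syn.castHom h h' f) g) :
    qcomp (qm f) (qm (eqh h')) = qcomp (qm (eqh h)) (qm g) := by
  subst h; subst h'; rw [qeqh_self, qeqh_self, qcomp_id, qid_comp]; exact qm_eq.2 e

theorem q_assoc_nat {M : ℕ} {u v u' v' u'' v'' : Word} (f : QHom M u v) (g : QHom M u' v')
    (h : QHom M u'' v'') :
    qcomp (qtensor (qtensor f g) h) (qm (eqh (List.append_assoc _ _ _))) =
      qcomp (qm (eqh (List.append_assoc _ _ _))) (qtensor f (qtensor g h)) := by
  induction f using qm_ind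
  induction g using qm_ind
  induction h using qm_ind
  exact qcast_comp _ _ _ _ (PGAeq.tensor_assoc _ _ _)

theorem q_right_nat {M : ℕ} {u v : Word} (f : QHom M u v) :
    qcomp (qtensor f (qm (Syn.id []))) (qm (eqh (List.append_nil _))) =
      qcomp (qm (eqh (List.append_nil _))) f := by
  induction f using qm_ind
  exact qcast_comp _ _ _ _ (PGAeq.tensor_nil _)

def qsw {M : ℕ} (u v : Word) : QHom M (u ++ v) (v ++ u) := qm (Syn.symm u v)

theorem q_swap_nat {M : ℕ} {u v u' v' : Word} (f : QHom M u v) (g : QHom M u' v') :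
    qcomp (qtensor f g) (qsw v v') = qcomp (qsw u u') (qtensor g f) := by
  induction f using qm_ind
  induction g using qm_ind
  exact qm_eq.2 (PGAeq.swap_nat _ _)

theorem q_swap_inv {M : ℕ} (u v : Word) :
    qcomp (qsw (M := M) u v) (qsw v u) = qm (Syn.id (u ++ v)) :=
  qm_eq.2 (PGAeq.swap_inv _ _)

theorem q_hex {M : ℕ} (u v w : Word) :
    qcomp (qm (eqh (List.append_assoc u v w)))
      (qcomp (qsw (M := M) u (v ++ w)) (qm (eqh (List.append_assoc v w u)))) =
    qcomp (qtensor (qsw u v) (qm (Syn.id w))) (qcomp (qm (eqh (List.append_assoc v u w)))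
      (qtensor (qm (Syn.id v)) (qsw u w))) := by
  have h := qm_eq.2 (PGAeq.hexagon (M := M) u v w)
  rw [qcast, ← qcomp_mk, qcast, qeqh_self, qcomp_id] at h
  unfold qsw
  rw [h]
  simp only [qassoc, qeqh_comp, qeqh_self, qcomp_id]
  simp only [← qassoc, qeqh_comp, qeqh_self, qid_comp]
  rfl

/-- The symmetry with the empty word, as an endomorphism. -/
def qs {M : ℕ} (u : Word) : QHom M u u :=
  qcomp (qm (eqh (List.append_nil u).symm)) (qsw u [])

def qt {M : ℕ} (u : Word) : QHom M u u :=
  qcomp (qsw [] u) (qm (eqh (List.append_nil u)))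

theorem qs_qt {M : ℕ} (u : Word) : qcomp (qs (M := M) u) (qt u) = qm (Syn.id u) := by
  have h := q_swap_inv (M := M) u []
  unfold qs qt
  rw [qassoc, ← qassoc (qsw u [])]
  erw [h]
  rw [qid_comp, qeqh_comp]; rfl

theorem qt_qs {M : ℕ} (u : Word) : qcomp (qt (M := M) u) (qs u) = qm (Syn.id u) := by
  have h := q_swap_inv (M := M) [] u
  unfold qs qt
  rw [qassoc, ← qassoc (qm (eqh (List.append_nil u))), qeqh_comp, qeqh_self, qid_comp]
  exact h

def qF {M : ℕ} {u v : Word} (f : QHom M u v) : QHom M u v := qtensor (qm (Syn.id [])) f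

theorem qF_t {M : ℕ} {u v : Word} (f : QHom M u v) :
    qcomp (qF f) (qt v) = qcomp (qt u) f := by
  have h := q_swap_nat (qm (Syn.id (M := M) [])) f
  have h2 := q_right_nat f
  unfold qt qF
  rw [← qassoc]
  erw [h]
  rw [qassoc, h2, ← qassoc]

theorem qs_hex {M : ℕ} (u : Word) : qs (M := M) u = qcomp (qs u) (qF (qs u)) := by
  have h := q_hex (M := M) u [] []
  have h2 := q_right_nat (qsw (M := M) u [])
  have h4 : qtensor (qm (Syn.id [])) (qsw (M := M) u []) =
      qcomp (qm (eqh (List.append_nil u))) (qF (qs u)) := by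
    have := qinter (qm (Syn.id (M := M) [])) (qm (Syn.id [])) (qm (eqh (List.append_nil u))) (qs u)
    rw [qid_comp] at this
    unfold qF
    have e : qcomp (qm (eqh (List.append_nil u))) (qs (M := M) u) = qsw u [] := by
      unfold qs
      rw [← qassoc, qeqh_comp, qeqh_self, qid_comp]
    rw [e] at this
    exact this.symm.trans (congrArg (fun z => qcomp z _)
      (qeqh_tensor (rfl : ([] : Word) = []) (List.append_nil u)))
  rw [h4] at h
  have h5 : qcomp (qtensor (qsw (M := M) u []) (qm (Syn.id []))) (qcomp (qm (eqh (List.append_nil u)))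
      (qF (qs u))) = qcomp (qm (eqh (List.append_nil _))) (qcomp (qsw u []) (qF (qs u))) := by
    rw [← qassoc, h2, qassoc]
  have h6 : qcomp (qm (eqh (List.append_nil (u ++ [])))) (qsw (M := M) u []) =
      qcomp (qm (eqh (List.append_nil _))) (qcomp (qsw u []) (qF (qs u))) := by
    rw [← h5]
    refine Eq.trans ?_ (h.trans ?_)
    · exact (congrArg (qcomp _) (qcomp_id _)).symm
    · exact congrArg (qcomp _) (qid_comp _)
  have h7 := congrArg (qcomp (qm (eqh (List.append_nil (u ++ [])).symm))) h6
  rw [← qassoc, ← qassoc, qeqh_comp, qeqh_self, qid_comp, qid_comp] at h7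
  unfold qs
  rw [qassoc]
  exact congrArg (qcomp _) h7

theorem qF_qs {M : ℕ} (u : Word) : qF (qs (M := M) u) = qm (Syn.id u) := by
  have h := congrArg (qcomp (qt u)) (qs_hex (M := M) u)
  rw [← qassoc, qt_qs, qid_comp] at h
  exact h.symm

theorem qt_id {M : ℕ} (u : Word) : qt (M := M) u = qm (Syn.id u) := by
  have h := qF_t (qs (M := M) u)
  rw [qF_qs, qt_qs, qid_comp] at h
  exact h

theorem qF_eq {M : ℕ} {u v : Word} (f : QHom M u v) : qtensor (qm (Syn.id [])) f = f := by
  have h := qF_t f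
  rw [qt_id, qt_id, qid_comp, qcomp_id] at h
  exact h

instance (M : ℕ) : Category (Ob M) where
  Hom X Y := QHom M X.w Y.w
  id X := qm (Syn.id X.w)
  comp f g := qcomp f g
  id_comp f := qid_comp f
  comp_id f := qcomp_id f
  assoc f g h := qassoc f g h

def eqIso {M : ℕ} {X Y : Ob M} (h : X.w = Y.w) : X ≅ Y where
  hom := (qm (eqh h) : QHom M X.w Y.w)
  inv := (qm (eqh h.symm) : QHom M Y.w X.w)
  hom_inv_id := qeqh_comp _ _
  inv_hom_id := qeqh_comp _ _

instance (M : ℕ) : MonoidalCategoryStruct (Ob M) where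
  tensorObj X Y := ⟨X.w ++ Y.w, X.h.append Y.h⟩
  tensorUnit := ⟨[], fun _ h => by cases h⟩
  tensorHom f g := qtensor f g
  whiskerLeft X _ _ g := qtensor (qm (Syn.id X.w)) g
  whiskerRight f Y := qtensor f (qm (Syn.id Y.w))
  associator X Y Z := eqIso (List.append_assoc _ _ _)
  leftUnitor X := eqIso (List.nil_append _)
  rightUnitor X := eqIso (List.append_nil _)

instance (M : ℕ) : MonoidalCategory (Ob M) := MonoidalCategory.ofTensorHom
  (id_tensorHom_id := fun X Y => qtid _ _)
  (id_tensorHom := fun X _ _ f => rfl)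
  (tensorHom_id := fun f Y => rfl)
  (tensorHom_comp_tensorHom := fun f₁ f₂ g₁ g₂ => qinter _ _ _ _)
  (associator_naturality := fun f g h => q_assoc_nat _ _ _)
  (leftUnitor_naturality := fun {X Y} f =>
    (qcomp_id _).trans ((qF_eq f).trans (qid_comp f).symm))
  (rightUnitor_naturality := fun f => q_right_nat f)
  (pentagon := fun W X Y Z => by
    refine (congrArg₂ qcomp (qeqh_tensor (List.append_assoc W.w X.w Y.w) (rfl : Z.w = Z.w))
      (congrArg (qcomp _)
        (qeqh_tensor (rfl : W.w = W.w) (List.append_assoc X.w Y.w Z.w)))).trans ?_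
    refine (congrArg (qcomp _) (qeqh_comp _ _)).trans ?_
    exact (qeqh_comp _ _).trans (qeqh_comp _ _).symm)
  (triangle := fun X Y => by
    refine (congrArg (qcomp _)
      (qeqh_tensor (rfl : X.w = X.w) (List.nil_append Y.w))).trans ?_
    refine (qeqh_comp _ _).trans ?_
    exact (qeqh_tensor (List.append_nil X.w) (rfl : Y.w = Y.w)).symm)

def swIso {M : ℕ} (X Y : Ob M) : X ⊗ Y ≅ Y ⊗ X where
  hom := (qsw X.w Y.w : QHom M _ _)
  inv := (qsw Y.w X.w : QHom M _ _)
  hom_inv_id := q_swap_inv _ _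
  inv_hom_id := q_swap_inv _ _

theorem sw_hex {M : ℕ} (X Y Z : Ob M) :
      (α_ X Y Z).hom ≫ (swIso X (Y ⊗ Z)).hom ≫ (α_ Y Z X).hom =
        ((swIso X Y).hom ▷ Z) ≫ (α_ Y X Z).hom ≫ (Y ◁ (swIso X Z).hom) :=
  q_hex X.w Y.w Z.w

instance (M : ℕ) : BraidedCategory (Ob M) where
  braiding := swIso
  braiding_naturality_right X _ _ f := q_swap_nat _ f
  braiding_naturality_left f Z := q_swap_nat f _
  hexagon_forward X Y Z := sw_hex X Y Z
  hexagon_reverse X Y Z := by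
    have h := sw_hex Z X Y
    have h' := congrArg (fun (f : (Z ⊗ X) ⊗ Y ≅ X ⊗ Y ⊗ Z) => f.inv)
      (Iso.ext (α := α_ Z X Y ≪≫ swIso Z (X ⊗ Y) ≪≫ α_ X Y Z)
        (β := whiskerRightIso (swIso Z X) Y ≪≫ α_ X Z Y ≪≫ whiskerLeftIso X (swIso Z Y)) (by
          simpa using h))
    have e : ∀ A B : Ob M, (swIso A B).inv = (swIso B A).hom := fun _ _ => rfl
    simpa [e] using h'

instance (M : ℕ) : SymmetricCategory (Ob M) where
  symmetry X Y := q_swap_inv _ _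


/-! ## Abstract part: copairing in symmetric monoidal categories -/

section Abstract
set_option linter.unusedSectionVars false

variable {C : Type*} [Category C] [MonoidalCategory C] [SymmetricCategory C]

instance mulHom (Z : C) [MonObj Z] [IsCommMonObj Z] : IsMonHom μ[Z] where
  one_hom := by
    rw [MonObj.tensorObj.one_def]; simp [← unitors_equal]
  mul_hom := by
    rw [MonObj.tensorObj.mul_def]; simp

instance oneHom (Z : C) [MonObj Z] : IsMonHom η[Z] where
  one_hom := by simp
  mul_hom := by simp [← unitors_equal]

/-- Copairing into a monoid object. -/
def cp {X Y Z : C} [MonObj Z] (f : X ⟶ Z) (g : Y ⟶ Z) : X ⊗ Y ⟶ Z := (f ⊗ₘ g) ≫ μ[Z]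

section
variable {X Y V Z : C} [MonObj Z]

theorem tensor_cp {X' Y' : C} (h : X' ⟶ X) (k : Y' ⟶ Y) (f : X ⟶ Z) (g : Y ⟶ Z) :
    (h ⊗ₘ k) ≫ cp f g = cp (h ≫ f) (k ≫ g) := by
  simp [cp, tensorHom_comp_tensorHom_assoc]

theorem cp_hom {Z' : C} [MonObj Z'] (f : X ⟶ Z) (g : Y ⟶ Z) (h : Z ⟶ Z') [IsMonHom h] :
    cp f g ≫ h = cp (f ≫ h) (g ≫ h) := by
  simp [cp, tensorHom_comp_tensorHom_assoc]

theorem cp_assoc (f : X ⟶ Z) (g : Y ⟶ Z) (h : V ⟶ Z) :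
    cp (cp f g) h = (α_ X Y V).hom ≫ cp f (cp g h) := by
  simp only [cp]
  simp only [mon_tauto]

theorem cp_braid [IsCommMonObj Z] (f : X ⟶ Z) (g : Y ⟶ Z) :
    (β_ Y X).hom ≫ cp f g = cp g f := by
  rw [cp, cp, ← BraidedCategory.braiding_naturality_assoc, IsCommMonObj.mul_comm]

theorem one_cp (g : Y ⟶ Z) : cp η[Z] g = (λ_ Y).hom ≫ g := by
  rw [cp, MonObj.one_mul_hom]

theorem mul_cp {A : C} [MonObj A] (a : A ⟶ Z) [IsMonHom a] : μ[A] ≫ a = cp a a :=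
  IsMonHom.mul_hom a

theorem split_cp [MonObj X] [MonObj Y] (h : X ⊗ Y ⟶ Z) [IsMonHom h] :
    h = cp ((ρ_ X).inv ≫ (𝟙 X ⊗ₘ η[Y]) ≫ h) ((λ_ Y).inv ≫ (η[X] ⊗ₘ 𝟙 Y) ≫ h) := by
  have e : 𝟙 (X ⊗ Y) = cp ((ρ_ X).inv ≫ (𝟙 X ⊗ₘ η[Y])) ((λ_ Y).inv ≫ (η[X] ⊗ₘ 𝟙 Y)) := by
    rw [cp, MonObj.tensorObj.mul_def, ← tensorHom_comp_tensorHom, Category.assoc,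
      tensorμ_natural_assoc, tensorHom_comp_tensorHom, MonObj.mul_one_hom, MonObj.one_mul_hom]
    have hb : (β_ (𝟙_ C) (𝟙_ C)).hom = 𝟙 _ := by simp [← unitors_equal]
    simp only [tensorμ, hb]
    monoidal
  have := cp_hom ((ρ_ X).inv ≫ (𝟙 X ⊗ₘ η[Y])) ((λ_ Y).inv ≫ (η[X] ⊗ₘ 𝟙 Y)) h
  rw [← e, Category.id_comp] at this
  simpa using this

instance cp_isMonHom [IsCommMonObj Z] [MonObj X] [MonObj Y] (f : X ⟶ Z) (g : Y ⟶ Z) [IsMonHom f]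
    [IsMonHom g] : IsMonHom (cp f g) := by
  unfold cp; infer_instance

end

structure PGS (A : C) [MonObj A] (I : Type) where
  p0 : A ⟶ A ⊗ A
  p1 : A ⟶ A ⊗ A
  l0 : A ⟶ 𝟙_ C
  l1 : A ⟶ 𝟙_ C
  pr : I → (A ⟶ A)
  hp0 : IsMonHom p0
  hp1 : IsMonHom p1
  hl0 : IsMonHom l0
  hl1 : IsMonHom l1
  hpr : ∀ p, IsMonHom (pr p)
  D1 : ∀ p, pr p ≫ p0 = p0 ≫ (pr p ⊗ₘ pr p)
  D2 : ∀ p, pr p ≫ l0 = l0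
  D3 : ∀ p, pr p ≫ p1 = p1 ≫ (pr p ⊗ₘ pr p)
  D4 : ∀ p, pr p ≫ l1 = l1
  B8 : p1 ≫ (β_ A A).hom = p1
  B22 : p1 ≫ (p0 ⊗ₘ 𝟙 A) = p0 ≫ (p1 ⊗ₘ p1) ≫ tensorμ A A A A ≫ (𝟙 (A ⊗ A) ⊗ₘ μ[A])
  B23 : p1 ≫ (l0 ⊗ₘ 𝟙 A) = l0 ≫ η[A] ≫ (λ_ A).inv
  C3 : ∀ p q, ∃ r, pr p ≫ pr q = pr r
  C4 : ∃ p, pr p = 𝟙 A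

attribute [instance] PGS.hp0 PGS.hp1 PGS.hl0 PGS.hl1 PGS.hpr

section
variable {A : C} [MonObj A] {I : Type} (S : PGS A I) {Z : C} [MonObj Z]
  (J : (A ⟶ Z) → Prop)

inductive Conj : (A ⟶ Z) → Prop
  | lit (p : I) (h : A ⟶ Z) : J h → IsMonHom h → Conj (S.pr p ≫ h)
  | top : Conj (S.l1 ≫ η[Z])
  | and {a b : A ⟶ Z} : Conj a → Conj b → Conj (S.p1 ≫ cp a b)

inductive Dnf : (A ⟶ Z) → Prop
  | conj {a : A ⟶ Z} : Conj S J a → Dnf a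
  | bot : Dnf (S.l0 ≫ η[Z])
  | or {a b : A ⟶ Z} : Dnf a → Dnf b → Dnf (S.p0 ≫ cp a b)

variable {S J}

theorem Conj.hom [IsCommMonObj Z] {a : A ⟶ Z} (h : Conj S J a) : IsMonHom a := by
  induction h with
  | lit p h _ _ => infer_instance
  | top => infer_instance
  | and _ _ _ _ => infer_instance

theorem Dnf.hom [IsCommMonObj Z] {a : A ⟶ Z} (h : Dnf S J a) : IsMonHom a := by
  induction h with
  | conj h => exact h.hom
  | bot => infer_instance
  | or _ _ _ _ => infer_instance

theorem Conj.pr (q : I) {a : A ⟶ Z} (h : Conj S J a) : Conj S J (S.pr q ≫ a) := by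
  induction h with
  | lit p h hj hh =>
    obtain ⟨r, hr⟩ := S.C3 q p
    rw [← Category.assoc, hr]
    exact Conj.lit r h hj hh
  | top =>
    rw [← Category.assoc, S.D4]; exact Conj.top
  | and _ _ h1 h2 =>
    rw [← Category.assoc, S.D3, Category.assoc, tensor_cp]
    exact Conj.and h1 h2

theorem Dnf.pr (q : I) {a : A ⟶ Z} (h : Dnf S J a) : Dnf S J (S.pr q ≫ a) := by
  induction h with
  | conj h => exact Dnf.conj (h.pr q)
  | bot =>
    rw [← Category.assoc, S.D2]; exact Dnf.bot
  | or _ _ h1 h2 =>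
    rw [← Category.assoc, S.D1, Category.assoc, tensor_cp]
    exact Dnf.or h1 h2

theorem and_comm' [IsCommMonObj Z] (a b : A ⟶ Z) : S.p1 ≫ cp a b = S.p1 ≫ cp b a := by
  conv_lhs => rw [← S.B8, Category.assoc, cp_braid]

theorem or_and [IsCommMonObj Z] (a b c : A ⟶ Z) [IsMonHom c] :
    S.p1 ≫ cp (S.p0 ≫ cp a b) c = S.p0 ≫ cp (S.p1 ≫ cp a c) (S.p1 ≫ cp b c) := by
  have h1 : cp (S.p0 ≫ cp a b) c = (S.p0 ⊗ₘ 𝟙 A) ≫ cp (cp a b) c := by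
    rw [tensor_cp, Category.id_comp]
  rw [h1, ← Category.assoc, S.B22, ← tensor_cp]
  simp only [Category.assoc]
  rw [tensor_cp, mul_cp, Category.id_comp]
  congr 2
  simp only [cp]
  simp only [← tensorHom_comp_tensorHom, Category.assoc]
  rw [← tensorμ_natural_assoc, MonObj.mul_mul_mul_comm]

theorem bot_and [IsCommMonObj Z] (c : A ⟶ Z) [IsMonHom c] :
    S.p1 ≫ cp (S.l0 ≫ η[Z]) c = S.l0 ≫ η[Z] := by
  have h1 : cp (S.l0 ≫ η[Z]) c = (S.l0 ⊗ₘ 𝟙 A) ≫ cp η[Z] c := by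
    rw [tensor_cp, Category.id_comp]
  rw [h1, ← Category.assoc, S.B23, one_cp]
  simp

theorem Dnf.and [IsCommMonObj Z] {a b : A ⟶ Z} (ha : Dnf S J a) (hb : Dnf S J b) :
    Dnf S J (S.p1 ≫ cp a b) := by
  induction ha with
  | conj ha =>
    induction hb with
    | conj hb => exact Dnf.conj (Conj.and ha hb)
    | bot =>
      have := ha.hom
      rw [and_comm', bot_and]; exact Dnf.bot
    | or _ _ h1 h2 =>
      have := ha.hom
      rw [and_comm', or_and]
      exact Dnf.or (by rw [and_comm']; exact h1) (by rw [and_comm']; exact h2)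
  | bot =>
    have := hb.hom
    rw [bot_and]; exact Dnf.bot
  | or _ _ h1 h2 =>
    have := hb.hom
    rw [or_and]; exact Dnf.or h1 h2

end

end Abstract


/-! ## Concrete part -/

def obA (M : ℕ) : Ob M := ⟨[Obj.r], fun _ h => by simpa using h⟩

/-- Class of a diagram as a morphism of the quotient category. -/
def cl {M : ℕ} (X Y : Ob M) (f : Syn M X.w Y.w) : X ⟶ Y := (qm f : QHom M X.w Y.w)

instance (M : ℕ) : MonObj (obA M) where
  one := cl (𝟙_ _) (obA M) Syn.start
  mul := cl (obA M ⊗ obA M) (obA M) Syn.merge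
  one_mul := qm_eq.2 PGAeq.B3l
  mul_one := qm_eq.2 PGAeq.B3r
  mul_assoc := (qm_eq.2 PGAeq.B1).trans (qid_comp _).symm

instance (M : ℕ) : IsCommMonObj (obA M) where
  mul_comm := qm_eq.2 PGAeq.B2

theorem tensorμ_conc (M : ℕ) : tensorμ (obA M) (obA M) (obA M) (obA M) =
    (qm ((Syn.id [Obj.r] ⊠ Syn.symm [Obj.r] [Obj.r]) ⊠ Syn.id [Obj.r]) :
      QHom M [Obj.r, Obj.r, Obj.r, Obj.r] [Obj.r, Obj.r, Obj.r, Obj.r]) := by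
  have h := q_assoc_nat (qm (Syn.id (M := M) [Obj.r])) (qsw [Obj.r] [Obj.r])
    (qm (Syn.id [Obj.r]))
  have h' : (qm ((Syn.id [Obj.r] ⊠ Syn.symm [Obj.r] [Obj.r]) ⊠ Syn.id [Obj.r]) :
      QHom M [Obj.r, Obj.r, Obj.r, Obj.r] [Obj.r, Obj.r, Obj.r, Obj.r]) =
      qm (Syn.id [Obj.r] ⊠ (Syn.symm [Obj.r] [Obj.r] ⊠ Syn.id [Obj.r])) :=
    (qcomp_id _).symm.trans (h.trans (qid_comp _))
  rw [h']
  refine Eq.trans (b := 𝟙 (obA M ⊗ obA M ⊗ obA M ⊗ obA M) ≫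
    ((obA M) ◁ (𝟙 (obA M ⊗ obA M ⊗ obA M))) ≫
    ((obA M) ◁ (β_ (obA M) (obA M)).hom ▷ (obA M)) ≫
    ((obA M) ◁ (𝟙 (obA M ⊗ obA M ⊗ obA M))) ≫ 𝟙 (obA M ⊗ obA M ⊗ obA M ⊗ obA M)) rfl ?_
  erw [Category.id_comp, Category.comp_id, MonoidalCategory.whiskerLeft_id, Category.id_comp]
  erw [Category.comp_id]
  rfl

def pgs (M : ℕ) : PGS (obA M) (Fin (M + 1)) where
  p0 := cl (obA M) (obA M ⊗ obA M) Syn.player0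
  p1 := cl (obA M) (obA M ⊗ obA M) Syn.player1
  l0 := cl (obA M) (𝟙_ _) Syn.lose0
  l1 := cl (obA M) (𝟙_ _) Syn.lose1
  pr p := cl (obA M) (obA M) (Syn.priority p)
  hp0 := 
    { one_hom := (qm_eq.2 PGAeq.B12).trans (qid_comp _).symm
      mul_hom := by
        rw [MonObj.tensorObj.mul_def, tensorμ_conc]
        exact (qm_eq.2 PGAeq.B10).trans (qm_eq.2 (PGAeq.comp_assoc _ _ _)) }
  hp1 := 
    { one_hom := (qm_eq.2 PGAeq.B13).trans (qid_comp _).symm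
      mul_hom := by
        rw [MonObj.tensorObj.mul_def, tensorμ_conc]
        exact (qm_eq.2 PGAeq.B18).trans (qm_eq.2 (PGAeq.comp_assoc _ _ _)) }
  hl0 :=
    { one_hom := qm_eq.2 PGAeq.B14
      mul_hom := (qm_eq.2 PGAeq.B11).trans (qcomp_id _).symm }
  hl1 :=
    { one_hom := qm_eq.2 PGAeq.B15
      mul_hom := (qm_eq.2 PGAeq.B19).trans (qcomp_id _).symm }
  hpr p :=
    { one_hom := qm_eq.2 (PGAeq.C2 p)
      mul_hom := qm_eq.2 (PGAeq.C1 p).symm_rel }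
  D1 p := qm_eq.2 (PGAeq.D1 p)
  D2 p := qm_eq.2 (PGAeq.D2 p)
  D3 p := qm_eq.2 (PGAeq.D3 p)
  D4 p := qm_eq.2 (PGAeq.D4 p)
  B8 := qm_eq.2 PGAeq.B8
  B22 := by
    rw [tensorμ_conc]
    refine (qm_eq.2 PGAeq.B22).trans ?_
    refine (qm_eq.2 (PGAeq.comp_assoc _ _ _)).trans ?_
    refine (qm_eq.2 (PGAeq.comp_assoc _ _ _)).trans ?_
    refine qm_eq.2 (PGAeq.comp_congr (PGAeq.refl _) (PGAeq.comp_congr (PGAeq.refl _)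
      (PGAeq.comp_congr (PGAeq.refl _) (PGAeq.tensor_congr (PGAeq.tensor_id _ _)
        (PGAeq.refl _)))))
  B23 := (qm_eq.2 PGAeq.B23).trans (congrArg (qcomp (qm (Syn.lose0 (M := M)))) (qcomp_id (qm (Syn.start (M := M)))).symm)
  C3 p q := ⟨max p q, qm_eq.2 (PGAeq.C3 p q)⟩
  C4 := ⟨0, qm_eq.2 PGAeq.C4⟩


/-! ## Layers in the quotient category -/

section Layers
variable {M : ℕ} (G : {v w : Word} → Syn M v w → Prop)

def LS {X Y : Ob M} (f : X ⟶ Y) : Prop := ∃ f' : Syn M X.w Y.w, Layer G f' ∧ cl X Y f' = f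

variable {G}

theorem LS.comp {X Y Z : Ob M} {f : X ⟶ Y} {g : Y ⟶ Z} (hf : LS G f) (hg : LS G g) :
    LS G (f ≫ g) := by
  obtain ⟨f', hf, rfl⟩ := hf
  obtain ⟨g', hg, rfl⟩ := hg
  exact ⟨f' ⨟ g', hf.comp hg, rfl⟩

theorem LS.tensor {X Y X' Y' : Ob M} {f : X ⟶ Y} {g : X' ⟶ Y'} (hf : LS G f) (hg : LS G g) :
    LS G (f ⊗ₘ g) := by
  obtain ⟨f', hf, rfl⟩ := hf
  obtain ⟨g', hg, rfl⟩ := hg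
  exact ⟨f' ⊠ g', hf.tensor hg, rfl⟩

theorem layer_eqh {u w : Word} (h : u = w) (hu : AllR u) : Layer G (eqh (M := M) h) := by
  subst h
  have : ∀ k, u = rword k → Layer G (Syn.id (M := M) u) := by
    rintro k rfl; exact Layer.id k
  exact this _ hu.eq

theorem layer_symm {u w : Word} (hu : AllR u) (hw : AllR w) :
    Layer G (Syn.symm (M := M) u w) := by
  have : ∀ k j, u = rword k → w = rword j → Layer G (Syn.symm (M := M) u w) := by
    rintro k j rfl rfl; exact Layer.symm k j
  exact this _ _ hu.eq hw.eq

theorem LS.eqIso {X Y : Ob M} (h : X.w = Y.w) : LS G (eqIso (X := X) (Y := Y) h).hom :=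
  ⟨eqh h, layer_eqh h X.h, rfl⟩

theorem LS.id (X : Ob M) : LS G (𝟙 X) := LS.eqIso (X := X) (Y := X) rfl
theorem LS.assoc (X Y Z : Ob M) : LS G (α_ X Y Z).hom := LS.eqIso _
theorem LS.assoc_inv (X Y Z : Ob M) : LS G (α_ X Y Z).inv :=
  LS.eqIso (X := X ⊗ Y ⊗ Z) (Y := (X ⊗ Y) ⊗ Z) (List.append_assoc _ _ _).symm
theorem LS.left_inv (X : Ob M) : LS G (λ_ X).inv :=
  LS.eqIso (X := X) (Y := 𝟙_ _ ⊗ X) (List.nil_append _).symm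
theorem LS.right_inv (X : Ob M) : LS G (ρ_ X).inv :=
  LS.eqIso (X := X) (Y := X ⊗ 𝟙_ _) (List.append_nil _).symm
theorem LS.braid (X Y : Ob M) : LS G (β_ X Y).hom := ⟨Syn.symm _ _, layer_symm X.h Y.h, rfl⟩

theorem LS.tensorμ (X Y X' Y' : Ob M) : LS G (tensorμ X Y X' Y') := by
  have hl : ∀ {P Q R : Ob M} {f : Q ⟶ R}, LS G f → LS G (P ◁ f) := fun h => by
    rw [← id_tensorHom]; exact (LS.id _).tensor h
  have hr : ∀ {P Q R : Ob M} {f : Q ⟶ R}, LS G f → LS G (f ▷ P) := fun h => by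
    rw [← tensorHom_id]; exact h.tensor (LS.id _)
  exact (LS.assoc _ _ _).comp ((hl (LS.assoc_inv _ _ _)).comp ((hl (hr (LS.braid _ _))).comp
    ((hl (LS.assoc _ _ _)).comp (LS.assoc_inv _ _ _))))

end Layers

def Lay3 {M : ℕ} {X Z : Ob M} (h : X ⟶ Z) : Prop :=
  ∃ (B C : Ob M) (f2 : X ⟶ B) (f3 : B ⟶ C) (f4 : C ⟶ Z),
    LS (@Gen1 M) f2 ∧ LS (@GenP M) f3 ∧ LS (@GenM M) f4 ∧ h = f2 ≫ f3 ≫ f4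

def Lay4 {M : ℕ} {X Z : Ob M} (h : X ⟶ Z) : Prop :=
  ∃ (B : Ob M) (f1 : X ⟶ B) (g : B ⟶ Z), LS (@Gen0 M) f1 ∧ Lay3 g ∧ h = f1 ≫ g

section
variable {M : ℕ} {X Y Z : Ob M}

theorem Lay3.ofM {h : X ⟶ Z} (hh : LS (@GenM M) h) : Lay3 h :=
  ⟨X, X, 𝟙 X, 𝟙 X, h, LS.id _, LS.id _, hh, by simp⟩

theorem Lay3.pre {f : X ⟶ Y} {h : Y ⟶ Z} (hf : LS (@Gen1 M) f) (hh : Lay3 h) : Lay3 (f ≫ h) := by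
  obtain ⟨B, C, f2, f3, f4, h2, h3, h4, rfl⟩ := hh
  exact ⟨B, C, f ≫ f2, f3, f4, hf.comp h2, h3, h4, by simp⟩

theorem Lay3.post {Z' : Ob M} {h : X ⟶ Z} {k : Z ⟶ Z'} (hh : Lay3 h) (hk : LS (@GenM M) k) :
    Lay3 (h ≫ k) := by
  obtain ⟨B, C, f2, f3, f4, h2, h3, h4, rfl⟩ := hh
  exact ⟨B, C, f2, f3, f4 ≫ k, h2, h3, h4.comp hk, by simp⟩

theorem Lay3.tensor {Z' : Ob M} {h : X ⟶ Z} {k : Y ⟶ Z'} (hh : Lay3 h) (hk : Lay3 k) :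
    Lay3 (h ⊗ₘ k) := by
  obtain ⟨B, C, f2, f3, f4, h2, h3, h4, rfl⟩ := hh
  obtain ⟨B', C', f2', f3', f4', h2', h3', h4', rfl⟩ := hk
  exact ⟨_, _, _, _, _, h2.tensor h2', h3.tensor h3', h4.tensor h4', by
    simp only [tensorHom_comp_tensorHom]⟩

theorem Lay4.of3 {h : X ⟶ Z} (hh : Lay3 h) : Lay4 h := ⟨X, 𝟙 X, h, LS.id _, hh, by simp⟩

theorem Lay4.pre {f : X ⟶ Y} {h : Y ⟶ Z} (hf : LS (@Gen0 M) f) (hh : Lay4 h) : Lay4 (f ≫ h) := by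
  obtain ⟨B, f1, g, h1, h2, rfl⟩ := hh
  exact ⟨B, f ≫ f1, g, hf.comp h1, h2, by simp⟩

theorem Lay4.cp [MonObj Z] (hm : LS (@GenM M) μ[Z]) {h : X ⟶ Z} {k : Y ⟶ Z} (hh : Lay4 h)
    (hk : Lay4 k) : Lay4 (cp h k) := by
  obtain ⟨B, f1, g, h1, h2, rfl⟩ := hh
  obtain ⟨B', f1', g', h1', h2', rfl⟩ := hk
  exact ⟨_, _, _, h1.tensor h1', (h2.tensor h2').post hm, by
    rw [PaperPG.cp, ← tensorHom_comp_tensorHom, Category.assoc]⟩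


abbrev JM (Z : Ob M) (h : obA M ⟶ Z) : Prop := LS (@GenM M) h

theorem Conj.lay [MonObj Z] (hm : LS (@GenM M) μ[Z]) (he : LS (@GenM M) η[Z])
    {a : obA M ⟶ Z} (h : Conj (pgs M) (JM Z) a) : Lay3 a := by
  induction h with
  | lit p h hj _ =>
    exact ⟨_, _, 𝟙 _, _, h, LS.id _, ⟨Syn.priority p, Layer.base (GenP.priority p), rfl⟩, hj,
      (Category.id_comp _).symm⟩
  | top => exact Lay3.pre ⟨Syn.lose1, Layer.base Gen1.lose1, rfl⟩ (Lay3.ofM he)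
  | and _ _ h1 h2 =>
    exact Lay3.pre ⟨Syn.player1, Layer.base Gen1.player1, rfl⟩ ((h1.tensor h2).post hm)

theorem Dnf.lay [MonObj Z] (hm : LS (@GenM M) μ[Z]) (he : LS (@GenM M) η[Z])
    {a : obA M ⟶ Z} (h : Dnf (pgs M) (JM Z) a) : Lay4 a := by
  induction h with
  | conj h => exact Lay4.of3 (h.lay hm he)
  | bot => exact Lay4.pre ⟨Syn.lose0, Layer.base Gen0.lose0, rfl⟩ (Lay4.of3 (Lay3.ofM he))
  | or _ _ h1 h2 =>
    exact Lay4.pre ⟨Syn.player0, Layer.base Gen0.player0, rfl⟩ (h1.cp hm h2)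
end

section
variable {M : ℕ} (Z : Ob M) [MonObj Z]

theorem AllR.tail {x : Obj} {u : Word} (h : AllR (x :: u)) : AllR u :=
  fun y hy => h y (List.mem_cons_of_mem _ hy)

def NFM : (w : Word) → (hw : AllR w) → ((⟨w, hw⟩ : Ob M) ⟶ Z) → Prop
  | [], _, h => h = η[Z]
  | Obj.r :: u, hw, h => ∃ (a : obA M ⟶ Z) (g : (⟨u, hw.tail⟩ : Ob M) ⟶ Z),
      Dnf (pgs M) (JM Z) a ∧ NFM u hw.tail g ∧ h = cp a g
  | Obj.l :: _, _, _ => False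

variable {Z}

theorem NFM.lay (hm : LS (@GenM M) μ[Z]) (he : LS (@GenM M) η[Z]) :
    ∀ (w : Word) (hw : AllR w) (h : (⟨w, hw⟩ : Ob M) ⟶ Z), NFM Z w hw h → Lay4 h
  | [], _, h, hh => by
    have : h = η[Z] := hh
    subst this
    exact Lay4.of3 (Lay3.ofM he)
  | Obj.r :: u, hw, h, ⟨a, g, ha, hg, e⟩ => by
    subst e
    exact Lay4.cp hm (ha.lay hm he) (NFM.lay hm he u hw.tail g hg)
  | Obj.l :: _, _, _, hh => hh.elim

theorem NFM.cp : ∀ (u v : Word) (hu : AllR u) (hv : AllR v) (f : (⟨u, hu⟩ : Ob M) ⟶ Z)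
    (g : (⟨v, hv⟩ : Ob M) ⟶ Z), NFM Z u hu f → NFM Z v hv g →
    NFM Z (u ++ v) (hu.append hv) (PaperPG.cp f g)
  | [], v, hu, hv, f, g, hf, hg => by
    have : f = η[Z] := hf
    subst this
    have e : PaperPG.cp η[Z] g = g := (one_cp g).trans (qid_comp g)
    exact (congrArg (NFM Z v hv) e).mpr hg
  | Obj.r :: u, v, hu, hv, f, g, ⟨a, f', ha, hf', e⟩, hg => by
    subst e
    exact ⟨a, PaperPG.cp f' g, ha, NFM.cp u v hu.tail hv f' g hf' hg,
      (cp_assoc a f' g).trans (qid_comp _)⟩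
  | Obj.l :: _, _, _, _, _, _, hh, _ => hh.elim

theorem NFM.split : ∀ (u v : Word) (hu : AllR u) (hv : AllR v)
    (h : (⟨u ++ v, hu.append hv⟩ : Ob M) ⟶ Z), NFM Z (u ++ v) (hu.append hv) h →
    ∃ (f : (⟨u, hu⟩ : Ob M) ⟶ Z) (g : (⟨v, hv⟩ : Ob M) ⟶ Z), NFM Z u hu f ∧ NFM Z v hv g ∧
      h = PaperPG.cp f g
  | [], v, hu, hv, h, hh => ⟨η[Z], h, rfl, hh, ((one_cp (Y := (⟨v, hv⟩ : Ob M)) h).trans (qid_comp _)).symm⟩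
  | Obj.r :: u, v, hu, hv, h, ⟨a, k, ha, hk, e⟩ => by
    obtain ⟨f, g, hf, hg, e'⟩ := NFM.split u v hu.tail hv k hk
    subst e'
    refine ⟨PaperPG.cp a f, g, ⟨a, f, ha, hf, rfl⟩, hg, e.trans ?_⟩
    exact ((cp_assoc a f g).trans (qid_comp _)).symm
  | Obj.l :: _, _, _, _, _, hh => hh.elim

theorem NFM.one {a : obA M ⟶ Z} : NFM Z [Obj.r] (obA M).h a ↔ Dnf (pgs M) (JM Z) a := by
  have e : ∀ b : obA M ⟶ Z, (PaperPG.cp b η[Z] : obA M ⊗ 𝟙_ _ ⟶ Z) = b := fun b =>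
    (MonObj.mul_one_hom b).trans (qid_comp b)
  constructor
  · rintro ⟨b, g, hb, hg, h⟩
    have hg : g = η[Z] := hg
    subst hg
    have : a = b := h.trans (e b)
    rw [this]; exact hb
  · intro h
    exact ⟨a, η[Z], h, rfl, (e a).symm⟩

end



theorem exMon {M : ℕ} : ∀ (w : Word) (hw : AllR w), ∃ (m : MonObj (⟨w, hw⟩ : Ob M))
    (c : IsCommMonObj (⟨w, hw⟩ : Ob M)), LS (@GenM M) μ[(⟨w, hw⟩ : Ob M)] ∧
      LS (@GenM M) η[(⟨w, hw⟩ : Ob M)] ∧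
      ∀ (Z : Ob M) [MonObj Z] [IsCommMonObj Z] (h : (⟨w, hw⟩ : Ob M) ⟶ Z), IsMonHom h →
        LS (@GenM M) h → NFM Z w hw h
  | [], hw => by
    refine ⟨(inferInstance : MonObj (𝟙_ (Ob M))), (inferInstance : IsCommMonObj (𝟙_ (Ob M))),
      LS.eqIso (X := 𝟙_ (Ob M) ⊗ 𝟙_ (Ob M)) (Y := 𝟙_ (Ob M)) rfl, LS.id (𝟙_ (Ob M)), ?_⟩
    intro Z _ _ h hh _
    have := @IsMonHom.one_hom (Ob M) _ _ _ _ _ _ h hh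
    exact (qid_comp _).symm.trans this
  | Obj.r :: u, hw => by
    obtain ⟨m, c, hm, he, ih⟩ := exMon (M := M) u hw.tail
    have hmA : LS (@GenM M) μ[obA M] := ⟨Syn.merge, Layer.base GenM.merge, rfl⟩
    have heA : LS (@GenM M) η[obA M] := ⟨Syn.start, Layer.base GenM.start, rfl⟩
    refine ⟨(inferInstance : MonObj (obA M ⊗ (⟨u, hw.tail⟩ : Ob M))),
      (inferInstance : IsCommMonObj (obA M ⊗ (⟨u, hw.tail⟩ : Ob M))), ?_, ?_, ?_⟩
    · exact (LS.tensorμ _ _ _ _).comp (hmA.tensor hm)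
    · exact (LS.left_inv (𝟙_ (Ob M))).comp (heA.tensor he)
    · intro Z _ _ h hh hl
      have : ∀ h : obA M ⊗ (⟨u, hw.tail⟩ : Ob M) ⟶ Z, IsMonHom h → LS (@GenM M) h →
          ∃ (a : obA M ⟶ Z) (g : (⟨u, hw.tail⟩ : Ob M) ⟶ Z),
            Dnf (pgs M) (JM Z) a ∧ NFM Z u hw.tail g ∧ h = cp a g := by
        intro h hh hl
        refine ⟨_, _, ?_, ?_, split_cp h⟩
        · obtain ⟨p, hp⟩ := (pgs M).C4
          have key : ∀ b : obA M ⟶ Z, JM Z b → IsMonHom b → Dnf (pgs M) (JM Z) b := by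
            intro b h1 h2
            have := Dnf.conj (Conj.lit (S := pgs M) (J := JM Z) p b h1 h2)
            rw [hp, Category.id_comp] at this
            exact this
          refine key _ ?_ ?_
          · exact (LS.right_inv _).comp (((LS.id _).tensor he).comp hl)
          · infer_instance
        · refine ih Z _ ?_ ?_
          · infer_instance
          · exact (LS.left_inv _).comp ((heA.tensor (LS.id _)).comp hl)
      exact this h hh hl
  | Obj.l :: u, hw => by
    have := hw Obj.l (by simp)
    cases this

section
variable {M : ℕ} {Z : Ob M} [MonObj Z] [IsCommMonObj Z]

theorem main_ind {u w : Word} {f : Syn M u w} (hf : Acyclic f) : ∃ (hu : AllR u) (hw : AllR w),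
    ∀ g : (⟨w, hw⟩ : Ob M) ⟶ Z, NFM Z w hw g → NFM Z u hu (cl ⟨u, hu⟩ ⟨w, hw⟩ f ≫ g) := by
  have h1 := (obA M).h
  have h2 := (obA M ⊗ obA M).h
  have h0 := (𝟙_ (Ob M)).h
  induction hf with
  | id k => exact ⟨allR_rword k, allR_rword k, fun g hg => (congrArg (NFM Z _ _) (qid_comp g)).mpr hg⟩
  | symm k j =>
    refine ⟨(allR_rword k).append (allR_rword j), (allR_rword j).append (allR_rword k), ?_⟩
    intro g hg
    obtain ⟨a, b, ha, hb, rfl⟩ := NFM.split _ _ (allR_rword j) (allR_rword k) g hg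
    have := NFM.cp _ _ _ _ _ _ hb ha
    rw [← cp_braid] at this
    exact this
  | player0 =>
    refine ⟨h1, h2, fun g hg => ?_⟩
    obtain ⟨a, b, ha, hb, rfl⟩ := NFM.split [Obj.r] [Obj.r] h1 h1 g hg
    exact NFM.one.2 (Dnf.or (NFM.one.1 ha) (NFM.one.1 hb))
  | player1 =>
    refine ⟨h1, h2, fun g hg => ?_⟩
    obtain ⟨a, b, ha, hb, rfl⟩ := NFM.split [Obj.r] [Obj.r] h1 h1 g hg
    exact NFM.one.2 (Dnf.and (NFM.one.1 ha) (NFM.one.1 hb))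
  | lose0 =>
    refine ⟨h1, h0, fun g hg => ?_⟩
    have : g = η[Z] := hg
    subst this
    exact NFM.one.2 Dnf.bot
  | lose1 =>
    refine ⟨h1, h0, fun g hg => ?_⟩
    have : g = η[Z] := hg
    subst this
    exact NFM.one.2 (Dnf.conj Conj.top)
  | merge =>
    refine ⟨h2, h1, fun g hg => ?_⟩
    have hd := NFM.one.1 hg
    have := hd.hom
    exact (congrArg (NFM Z _ _) (mul_cp (A := obA M) g)).mpr (NFM.cp [Obj.r] [Obj.r] h1 h1 g g hg hg)
  | start =>
    refine ⟨h0, h1, fun g hg => ?_⟩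
    have hd := NFM.one.1 hg
    have := hd.hom
    exact IsMonHom.one_hom (M := obA M) g
  | priority p =>
    exact ⟨h1, h1, fun g hg => NFM.one.2 (Dnf.pr p (NFM.one.1 hg))⟩
  | comp _ _ ih1 ih2 =>
    obtain ⟨hu, hv, k1⟩ := ih1
    obtain ⟨_, hw, k2⟩ := ih2
    refine ⟨hu, hw, fun g hg => ?_⟩
    have := k1 _ (k2 g hg)
    rw [← Category.assoc] at this
    exact this
  | tensor _ _ ih1 ih2 =>
    obtain ⟨hu, hv, k1⟩ := ih1
    obtain ⟨hu', hv', k2⟩ := ih2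
    refine ⟨hu.append hu', hv.append hv', fun g hg => ?_⟩
    obtain ⟨a, b, ha, hb, rfl⟩ := NFM.split _ _ hv hv' g hg
    have := NFM.cp _ _ _ _ _ _ (k1 _ ha) (k2 _ hb)
    rw [← tensor_cp] at this
    exact this
end

theorem layer_acyclic {M : ℕ} {G : {v w : Word} → Syn M v w → Prop}
    (hG : ∀ {v w : Word} {f : Syn M v w}, G f → Acyclic f) {v w : Word} {f : Syn M v w}
    (h : Layer G f) : Acyclic f := by
  induction h with
  | base h => exact hG h
  | id k => exact Acyclic.id k
  | symm k j => exact Acyclic.symm k j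
  | comp _ _ h1 h2 => exact h1.comp h2
  | tensor _ _ h1 h2 => exact h1.tensor h2

theorem main_thm (M m n : ℕ)
    (d : Syn M (rword m) (rword n)) (hd : Acyclic d) :
    ∃ d' : Syn M (rword m) (rword n), Acyclic d' ∧ InNormalForm d' ∧ PGAeq d d' := by
  obtain ⟨mo, c, hm, he, hn⟩ := exMon (M := M) (rword n) (allR_rword n)
  have hid := hn _ (𝟙 _) inferInstance (LS.id _)
  obtain ⟨hu, hw, k⟩ := main_ind (Z := (⟨rword n, allR_rword n⟩ : Ob M)) hd
  have hk := k _ hid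
  rw [Category.comp_id] at hk
  obtain ⟨B, f1, g, ⟨f1', l1, rfl⟩, ⟨C, D, f2, f3, f4, ⟨f2', l2, rfl⟩, ⟨f3', l3, rfl⟩,
    ⟨f4', l4, rfl⟩, rfl⟩, e⟩ := NFM.lay hm he _ _ _ hk
  refine ⟨f1' ⨟ (f2' ⨟ (f3' ⨟ f4')), ?_, ⟨_, _, _, f1', f2', f3', f4', l1, l2, l3, l4, rfl⟩,
    qm_eq.1 e⟩
  refine (layer_acyclic ?_ l1).comp ((layer_acyclic ?_ l2).comp ((layer_acyclic ?_ l3).comp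
    (layer_acyclic ?_ l4)))
  · rintro _ _ _ (_ | _)
    · exact Acyclic.player0
    · exact Acyclic.lose0
  · rintro _ _ _ (_ | _)
    · exact Acyclic.player1
    · exact Acyclic.lose1
  · rintro _ _ _ ⟨p⟩
    exact Acyclic.priority p
  · rintro _ _ _ (_ | _)
    · exact Acyclic.merge
    · exact Acyclic.start


end Helpers

/-- **Statement 7** (Acyclic normalisation). Every acyclic diagram `d : ▶^m → ▶^n`
is PGA-equal to an acyclic diagram in normal form. -/
theorem acyclic_normalisation (M : ℕ) (hM : 2 ≤ M) (m n : ℕ)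
    (d : Syn M (rword m) (rword n)) (hd : Acyclic d) :
    ∃ d' : Syn M (rword m) (rword n), Acyclic d' ∧ InNormalForm d' ∧ PGAeq d d' := by
  exact main_thm M m n d hd

end PaperPG
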